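/- Let d ≥ 1, let Π₁ be a d×d real matrix, and let ‖·‖_* be a vector norm on ℝ^d whose induced matrix norm satisfies |||Π₁|||_* ≤ ϖ for some ϖ ∈ (0,1). Let s₀ ≥ 1 and α ∈ (0,1), and let ι = (1,0,…,0)' ∈ ℝ^d. Then for every δ > 0 there exist constants s₁ > 0, ϖ̃ ∈ (0,1) and C < ∞ such that for all z₁ ∈ ℝ and all z₂ ∈ ℝ^d, s₁‖Π₁z₂ + z₁ι‖_*^{2s₀α} ≤ s₁‖z₂‖_*^{2s₀α} − ϖ̃ s₁^α ‖z₂‖_*^{2s₀α²} + δ|z₁|^{2s₀α} + C. -/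

import Mathlib

/-- A vector norm on ℝ^d, given as a function satisfying the norm axioms. -/
def IsVectorNorm {d : ℕ} (N : (Fin d → ℝ) → ℝ) : Prop :=
  (∀ x, 0 ≤ N x) ∧ (∀ x, N x = 0 ↔ x = 0) ∧
  (∀ (c : ℝ) (x : Fin d → ℝ), N (c • x) = |c| * N x) ∧
  (∀ x y : Fin d → ℝ, N (x + y) ≤ N x + N y)

/-- The matrix norm induced by a vector norm N: |||A||| = sup_{N x = 1} N (A x). -/
noncomputable def inducedMatNorm {d : ℕ} (N : (Fin d → ℝ) → ℝ)
    (A : Matrix (Fin d) (Fin d) ℝ) : ℝ :=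
  sSup {c : ℝ | ∃ x : Fin d → ℝ, N x = 1 ∧ c = N (A.mulVec x)}

theorem aux_bdd {V : Type*} [AddCommGroup V] [Module ℝ V] [FiniteDimensional ℝ V]
    (N : V → ℝ) (h0 : ∀ x, 0 ≤ N x) (h1 : ∀ x, N x = 0 ↔ x = 0)
    (h2 : ∀ (c : ℝ) x, N (c • x) = |c| * N x) (h3 : ∀ x y, N (x + y) ≤ N x + N y)
    (f : V →ₗ[ℝ] V) : ∃ K, ∀ x, N (f x) ≤ K * N x := by
  letI : Norm V := ⟨N⟩
  have core : NormedSpace.Core ℝ V :=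
    { norm_nonneg := h0
      norm_smul := h2
      norm_triangle := h3
      norm_eq_zero_iff := h1 }
  letI : NormedAddCommGroup V := NormedAddCommGroup.ofCore core
  letI : NormedSpace ℝ V := NormedSpace.ofCore core
  exact ⟨‖LinearMap.toContinuousLinearMap f‖,
    fun x => (LinearMap.toContinuousLinearMap f).le_opNorm x⟩

theorem aux_op {d : ℕ} (A : Matrix (Fin d) (Fin d) ℝ) (N : (Fin d → ℝ) → ℝ)
    (hN : IsVectorNorm N) (w : ℝ) (hop : inducedMatNorm N A ≤ w) (x : Fin d → ℝ) :
    N (A.mulVec x) ≤ w * N x := by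
  obtain ⟨h0, h1, h2, h3⟩ := hN
  obtain ⟨K, hK⟩ := aux_bdd N h0 h1 h2 h3 A.mulVecLin
  simp only [Matrix.mulVecLin_apply] at hK
  by_cases hx : N x = 0
  · have := hK x
    rw [hx] at this ⊢
    simpa using this
  have hpos : 0 < N x := lt_of_le_of_ne (h0 x) (Ne.symm hx)
  have hb : BddAbove {c : ℝ | ∃ x : Fin d → ℝ, N x = 1 ∧ c = N (A.mulVec x)} := by
    refine ⟨K, ?_⟩
    rintro c ⟨y, hy, rfl⟩
    simpa [hy] using hK y
  have h4 : N (A.mulVec ((N x)⁻¹ • x)) ≤ w := by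
    refine le_trans (le_csSup hb ⟨(N x)⁻¹ • x, ?_, rfl⟩) hop
    rw [h2, abs_of_pos (inv_pos.2 hpos), inv_mul_cancel₀ hx]
  rw [Matrix.mulVec_smul, h2, abs_of_pos (inv_pos.2 hpos), inv_mul_le_iff₀ hpos] at h4
  linarith

theorem aux_split (w p : ℝ) (hw0 : 0 < w) (hw1 : w < 1) (hp : 0 < p) :
    ∃ r K : ℝ, r < 1 ∧ 0 < K ∧ ∀ a b : ℝ, 0 ≤ a → 0 ≤ b →
      (w * a + b) ^ p ≤ r * a ^ p + K * b ^ p := by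
  have he : 0 < (1 - w) / 2 := by linarith
  have hK : 0 < w / ((1 - w) / 2) + 1 := by positivity
  refine ⟨((1 + w) / 2) ^ p, (w / ((1 - w) / 2) + 1) ^ p,
    Real.rpow_lt_one (by linarith) (by linarith) hp, Real.rpow_pos_of_pos hK p, ?_⟩
  intro a b ha hb
  have ta : 0 ≤ ((1 + w) / 2) ^ p * a ^ p := by positivity
  have tb : 0 ≤ (w / ((1 - w) / 2) + 1) ^ p * b ^ p := by positivity
  rcases le_total b ((1 - w) / 2 * a) with h | h
  · have : (w * a + b) ^ p ≤ ((1 + w) / 2 * a) ^ p :=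
      Real.rpow_le_rpow (by positivity) (by linarith) hp.le
    rw [Real.mul_rpow (by linarith) ha] at this
    linarith
  · have h5 : a ≤ b / ((1 - w) / 2) := by
      rw [le_div_iff₀ he]; linarith
    have h6 : w * a + b ≤ (w / ((1 - w) / 2) + 1) * b := by
      have := mul_le_mul_of_nonneg_left h5 hw0.le
      have e : (w / ((1 - w) / 2) + 1) * b = w * (b / ((1 - w) / 2)) + b := by ring
      linarith
    have : (w * a + b) ^ p ≤ ((w / ((1 - w) / 2) + 1) * b) ^ p :=
      Real.rpow_le_rpow (by positivity) h6 hp.le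
    rw [Real.mul_rpow hK.le hb] at this
    linarith

theorem aux_young (B D α : ℝ) (hB : 0 < B) (hD : 0 < D) (h0 : 0 < α) (h1 : α < 1) :
    ∃ C, ∀ x : ℝ, 0 ≤ x → B * x ^ α ≤ D * x + C := by
  have hDB : 0 < D / B := by positivity
  set M := (D / B) ^ (1 / (α - 1)) with hM
  have hMpos : 0 < M := Real.rpow_pos_of_pos hDB _
  have hMe : M ^ (α - 1) = D / B := by
    rw [hM, ← Real.rpow_mul hDB.le, one_div_mul_cancel (by linarith), Real.rpow_one]
  refine ⟨B * M ^ α, fun x hx => ?_⟩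
  rcases le_total x M with h | h
  · have := Real.rpow_le_rpow hx h h0.le
    have := mul_le_mul_of_nonneg_left this hB.le
    have : 0 ≤ D * x := by positivity
    linarith
  · have hxp : 0 < x := by linarith
    have h2 : x ^ (α - 1) ≤ D / B := by
      rw [← hMe]
      exact Real.rpow_le_rpow_of_nonpos hMpos h (by linarith)
    have h3 : x ^ α = x ^ (α - 1) * x := by
      rw [← Real.rpow_add_one hxp.ne']; congr 1; ring
    rw [le_div_iff₀ hB] at h2
    have h4 := mul_le_mul_of_nonneg_right h2 hx
    have : 0 ≤ B * M ^ α := by positivity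
    rw [h3]
    linarith

/-- drift bound for the component V₂.  If |||Pi1|||_* ≤ ϖ < 1, s₀ ≥ 1,
α ∈ (0,1) and ι = (1,0,…,0)', then for every δ > 0 there are s₁ > 0, ϖ̃ ∈ (0,1) and
C < ∞ such that for all z₁ ∈ ℝ and z₂ ∈ ℝ^d:
s₁‖Pi1z₂+z₁ι‖_*^{2s₀α} ≤ s₁‖z₂‖_*^{2s₀α} − ϖ̃s₁^α‖z₂‖_*^{2s₀α²} + δ|z₁|^{2s₀α} + C. -/
theorem stmt_12 (d : ℕ) (hd : 1 ≤ d) (Pi1 : Matrix (Fin d) (Fin d) ℝ)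
    (Nstar : (Fin d → ℝ) → ℝ) (hN : IsVectorNorm Nstar)
    (ϖ : ℝ) (hϖ0 : 0 < ϖ) (hϖ1 : ϖ < 1) (hop : inducedMatNorm Nstar Pi1 ≤ ϖ)
    (s₀ α : ℝ) (hs₀ : 1 ≤ s₀) (hα0 : 0 < α) (hα1 : α < 1) :
    ∀ δ : ℝ, 0 < δ → ∃ s₁ : ℝ, 0 < s₁ ∧ ∃ ϖt : ℝ, 0 < ϖt ∧ ϖt < 1 ∧ ∃ C : ℝ,
      ∀ (z₁ : ℝ) (z₂ : Fin d → ℝ),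
        s₁ * Nstar (Pi1.mulVec z₂ + fun i : Fin d => if (i : ℕ) = 0 then z₁ else 0)
            ^ (2 * s₀ * α)
          ≤ s₁ * Nstar z₂ ^ (2 * s₀ * α)
            - ϖt * s₁ ^ α * Nstar z₂ ^ (2 * s₀ * α ^ 2)
            + δ * |z₁| ^ (2 * s₀ * α) + C := by
  intro δ hδ
  have hp : 0 < 2 * s₀ * α := by positivity
  obtain ⟨r, K, hr, hK, hsplit⟩ := aux_split ϖ (2 * s₀ * α) hϖ0 hϖ1 hp
  set e : Fin d → ℝ := fun i => if (i : ℕ) = 0 then 1 else 0 with he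
  have hc : 0 ≤ Nstar e := hN.1 e
  set c := Nstar e with hcdef
  have hcp : 0 ≤ K * c ^ (2 * s₀ * α) := by positivity
  set s := δ / (K * c ^ (2 * s₀ * α) + 1) with hs
  have hspos : 0 < s := by positivity
  have hsδ : s * (K * c ^ (2 * s₀ * α)) ≤ δ := by
    have : s * (K * c ^ (2 * s₀ * α) + 1) = δ := by
      rw [hs]; field_simp
    linarith
  obtain ⟨C, hC⟩ := aux_young (1 / 2 * s ^ α) (s * (1 - r)) α (by positivity)
    (mul_pos hspos (by linarith)) hα0 hα1
  refine ⟨s, hspos, 1 / 2, by norm_num, by norm_num, C, fun z₁ z₂ => ?_⟩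
  have hv : (fun i : Fin d => if (i : ℕ) = 0 then z₁ else 0) = z₁ • e := by
    ext i; simp [he]
  rw [hv]
  have ha : 0 ≤ Nstar z₂ := hN.1 z₂
  have h1 : Nstar (Pi1.mulVec z₂ + z₁ • e) ≤ ϖ * Nstar z₂ + |z₁| * c := by
    have h2 := hN.2.2.2 (Pi1.mulVec z₂) (z₁ • e)
    rw [hN.2.2.1] at h2
    have h3 := aux_op Pi1 Nstar hN ϖ hop z₂
    linarith
  have h4 := (Real.rpow_le_rpow (hN.1 _) h1 hp.le).trans
    (hsplit (Nstar z₂) (|z₁| * c) ha (by positivity))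
  rw [Real.mul_rpow (abs_nonneg _) hc] at h4
  have h5 := mul_le_mul_of_nonneg_left h4 hspos.le
  have h6 := hC (Nstar z₂ ^ (2 * s₀ * α)) (by positivity)
  rw [← Real.rpow_mul ha, show 2 * s₀ * α * α = 2 * s₀ * α ^ 2 by ring] at h6
  have h7 := mul_le_mul_of_nonneg_right hsδ
    (Real.rpow_nonneg (abs_nonneg z₁) (2 * s₀ * α))
  linarith
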